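/- Let g ∈ ℤ[x] be irreducible of degree d ≥ 1 with leading coefficient c, let α ∈ ℂ be a root of g, and let K = ℚ(α). Set 𝐃_g = |c|^{(d−1)(d−2)}·|D_g|. Then for every real x > max{2, √𝐃_g}, | Σ_{p ≤ x} ω_g(p)/p − Σ_{N(𝔭) ≤ x} 1/N(𝔭) | ≤ d·( M_ℚ(|c|) + M_ℚ(√𝐃_g) + 0.64 ), where the second sum runs over the prime ideals 𝔭 of the ring of integers O_K of K with norm N(𝔭) ≤ x. -/

import Mathlib

open Polynomial

/-- Sylvester matrix of `f` and `g` (columns of `f`-coefficients first). -/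
noncomputable def sylvesterMat (f g : Polynomial ℤ) :
    Matrix (Fin (g.natDegree + f.natDegree)) (Fin (g.natDegree + f.natDegree)) ℤ :=
  fun i j =>
    if (j : ℕ) < g.natDegree then
      (if (j : ℕ) ≤ (i : ℕ) ∧ (i : ℕ) ≤ (j : ℕ) + f.natDegree
        then f.coeff (f.natDegree + j - i) else 0)
    else
      (if (j : ℕ) - g.natDegree ≤ (i : ℕ) ∧ (i : ℕ) ≤ (j : ℕ)
        then g.coeff ((j : ℕ) - (i : ℕ)) else 0)

/-- The resultant `R(f,g)` of two integer polynomials: the determinant of the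
Sylvester matrix. -/
noncomputable def resultantZ (f g : Polynomial ℤ) : ℤ := (sylvesterMat f g).det

/-- The discriminant `D_f = ((-1)^(n(n-1)/2)/a_n) · R(f, f')` of an integer polynomial
(the division is exact). -/
noncomputable def polyDisc (f : Polynomial ℤ) : ℤ :=
  ((-1 : ℤ) ^ (f.natDegree * (f.natDegree - 1) / 2) * resultantZ f (derivative f))
    / f.leadingCoeff

/-- `ω_f(p)`: the number of `x ∈ ℤ/pℤ` with `f(x) ≡ 0 (mod p)`. -/
noncomputable def omegaPoly (f : Polynomial ℤ) (p : ℕ) : ℕ :=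
  {x : ZMod p | Polynomial.aeval x f = 0}.ncard

/-- `M_ℚ(x) = Σ_{p ≤ x} 1/p`, the sum over rational primes `p ≤ x`. -/
noncomputable def MQ (x : ℝ) : ℝ :=
  ∑ p ∈ Finset.filter Nat.Prime (Finset.range (⌊x⌋₊ + 1)), (1 : ℝ) / (p : ℝ)

/-- `Σ_{p ≤ x} ω_f(p)/p`, the sum over rational primes `p ≤ x`. -/
noncomputable def omegaSum (f : Polynomial ℤ) (x : ℝ) : ℝ :=
  ∑ p ∈ Finset.filter Nat.Prime (Finset.range (⌊x⌋₊ + 1)), (omegaPoly f p : ℝ) / (p : ℝ)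

/-- `M_K(x) = Σ_{N(𝔭) ≤ x} 1/N(𝔭)`, the sum over the (nonzero) prime ideals `𝔭` of the
ring of integers of `K` with absolute norm `N(𝔭) ≤ x`. -/
noncomputable def MK (K : Type*) [Field K] [NumberField K] (x : ℝ) : ℝ :=
  ∑' P : {P : Ideal (NumberField.RingOfIntegers K) //
      P.IsPrime ∧ P ≠ ⊥ ∧ (Ideal.absNorm P : ℝ) ≤ x},
    (1 : ℝ) / (Ideal.absNorm P.1 : ℝ)

/-!
Put `c` for the leading coefficient of `g` and `β = cα`. Then `β` is an algebraic integer generating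
`K`, its minimal polynomial `h` over `ℤ` is the integral normalization of `g`, and
`disc h = c ^ ((d - 1) * (d - 2)) * disc g`. Both sums are compared with `Σ_{p ≤ x} r₁(p)/p`, where
`r₁(p)` counts the primes of norm `p` above `p`.

* For `p ∤ c`, multiplication by `c` is a bijection from the roots of `g` modulo `p` to those of
  `h`; if moreover `ℤ[β]` is `p`-maximal, Dedekind–Kummer matches the latter with the primes of
  norm `p`, so `ω_g(p) = r₁(p)`. Otherwise `p ∣ c` or `p ^ 2 ∣ disc h`, that is, `p ≤ |c|` or
  `p ≤ √𝐃_g`, and such a `p` contributes at most `d / p` because `ω_g(p)` and `r₁(p)` both lie in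
  `[0, d]`.
* The other primes above `p`, at most `d` of them, have norm at least `p ^ 2`, and
  `Σ 1 / p ^ 2 ≤ 1/4 + 1/9 + Σ_{n ≥ 5} 1 / n ^ 2 ≤ 1/4 + 1/9 + 1/4 < 0.64`.
-/

section Discriminant

theorem sylvesterMat_eq_submatrix_sylvester (f g : ℤ[X]) :
    sylvesterMat f g = (sylvester g f g.natDegree f.natDegree).submatrix Fin.revPerm
      (finSumFinEquiv.symm.trans
        ((Equiv.sumCongr Fin.revPerm Fin.revPerm).trans finSumFinEquiv)) := by
  ext i j
  induction j using Fin.addCases with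
  | left j =>
    simp only [sylvesterMat, Fin.val_castAdd, Fin.is_lt, ↓reduceIte, sylvester, Set.mem_Icc,
      Equiv.coe_trans, Matrix.submatrix_apply, Fin.revPerm_apply, Function.comp_apply,
      finSumFinEquiv_symm_apply_castAdd, Equiv.sumCongr_apply, Sum.map_inl,
      finSumFinEquiv_apply_left, Matrix.of_apply, Fin.val_rev, Fin.addCases_left]
    grind
  | right j =>
    simp only [sylvesterMat, Fin.val_natAdd, add_lt_iff_neg_left, not_lt_zero, ↓reduceIte,
      add_tsub_cancel_left, sylvester, Set.mem_Icc, Equiv.coe_trans, Matrix.submatrix_apply,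
      Fin.revPerm_apply, Function.comp_apply, finSumFinEquiv_symm_apply_natAdd,
      Equiv.sumCongr_apply, Sum.map_inr, finSumFinEquiv_apply_right, Matrix.of_apply,
      Fin.val_rev, Fin.addCases_right]
    grind

theorem abs_resultantZ (f g : ℤ[X]) : |resultantZ f g| = |resultant g f| := by
  rw [resultantZ, sylvesterMat_eq_submatrix_sylvester, Matrix.abs_det_submatrix_equiv_equiv,
    resultant]

theorem abs_polyDisc {f : ℤ[X]} (hf : 0 < f.natDegree) : |polyDisc f| = |f.discr| := by
  have hlc : |f.leadingCoeff| ≠ 0 := by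
    simpa using ne_zero_of_natDegree_gt hf
  have hres : |resultantZ f (derivative f)| = |f.leadingCoeff| * |f.discr| := by
    rw [abs_resultantZ, resultant_comm, natDegree_derivative,
      resultant_deriv (natDegree_pos_iff_degree_pos.mp hf)]
    simp [abs_mul]
  have hdvd : f.leadingCoeff ∣
      (-1) ^ (f.natDegree * (f.natDegree - 1) / 2) * resultantZ f (derivative f) :=
    ((abs_dvd_abs _ _).mp (hres ▸ dvd_mul_right _ _)).mul_left _
  refine mul_left_cancel₀ hlc ?_
  rw [← hres, ← abs_mul, polyDisc, Int.mul_ediv_cancel' hdvd]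
  simp [abs_mul]

variable {R : Type*} [CommRing R]

theorem derivative_scaleRoots (f : R[X]) (r : R)
    (hf : (derivative f).natDegree = f.natDegree - 1) :
    derivative (f.scaleRoots r) = (derivative f).scaleRoots r := by
  ext i
  rw [coeff_derivative, coeff_scaleRoots, coeff_scaleRoots, coeff_derivative, hf,
    Nat.sub_sub, Nat.add_comm 1 i]
  ring

theorem discr_eq_resultant_of_monic {f : R[X]} (hf : f.Monic) :
    f.discr = (-1) ^ (f.natDegree * (f.natDegree - 1) / 2) *
      resultant f (derivative f) f.natDegree (f.natDegree - 1) := by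
  nontriviality R
  rcases f.natDegree.eq_zero_or_pos with h0 | hpos
  · rw [hf.natDegree_eq_zero.mp h0, ← C_1, discr_C]
    simp
  · rw [resultant_deriv (natDegree_pos_iff_degree_pos.mp hpos), hf.leadingCoeff, mul_one,
      ← mul_assoc, ← pow_add, Even.neg_one_pow ⟨_, rfl⟩, one_mul]

theorem discr_map_of_monic {S : Type*} [CommRing S] (φ : R →+* S) {f : R[X]} (hf : f.Monic) :
    (f.map φ).discr = φ f.discr := by
  nontriviality S
  rw [discr_eq_resultant_of_monic (hf.map φ), discr_eq_resultant_of_monic hf, hf.natDegree_map,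
    derivative_map, resultant_map_map]
  simp

variable [IsDomain R]

theorem discr_C_mul (f : R[X]) {a : R} (ha : a ≠ 0) :
    (C a * f).discr = a ^ (2 * (f.natDegree - 1)) * f.discr := by
  rcases f.natDegree.eq_zero_or_pos with h0 | hpos
  · obtain ⟨b, rfl⟩ := natDegree_eq_zero.mp h0
    rw [← C_mul, discr_C, discr_C, natDegree_C, zero_tsub, mul_zero, pow_zero, one_mul]
  have hlc : (-1) ^ (f.natDegree * (f.natDegree - 1) / 2) * (a * f.leadingCoeff) ≠ 0 :=
    mul_ne_zero (by simp)
      (mul_ne_zero ha (leadingCoeff_ne_zero.mpr (ne_zero_of_natDegree_gt hpos)))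
  have hdeg : 0 < f.degree := natDegree_pos_iff_degree_pos.mp hpos
  have hres := resultant_deriv (f := C a * f) (by rwa [degree_C_mul ha])
  rw [derivative_C_mul, natDegree_C_mul ha, leadingCoeff_mul, leadingCoeff_C,
    resultant_C_mul_left, resultant_C_mul_right, resultant_deriv hdeg] at hres
  refine mul_left_cancel₀ hlc ?_
  rw [← hres]
  obtain ⟨n, hn⟩ := Nat.exists_eq_add_one.mpr hpos
  simp only [hn, Nat.add_sub_cancel]
  ring

variable [CharZero R]

theorem discr_scaleRoots (f : R[X]) (r : R) :
    (f.scaleRoots r).discr = r ^ (f.natDegree * (f.natDegree - 1)) * f.discr := by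
  rcases f.natDegree.eq_zero_or_pos with h0 | hpos
  · obtain ⟨a, rfl⟩ := natDegree_eq_zero.mp h0
    simp
  have hlc : (-1) ^ (f.natDegree * (f.natDegree - 1) / 2) * f.leadingCoeff ≠ 0 :=
    mul_ne_zero (by simp) (leadingCoeff_ne_zero.mpr (ne_zero_of_natDegree_gt hpos))
  have hdeg : 0 < f.degree := natDegree_pos_iff_degree_pos.mp hpos
  have hderiv : (derivative f).natDegree = f.natDegree - 1 := natDegree_derivative f
  have hres := resultant_scaleRoots f (derivative f) r
  rw [← derivative_scaleRoots f r hderiv, natDegree_derivative (f.scaleRoots r), hderiv,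
    resultant_deriv hdeg, resultant_deriv (by rwa [degree_scaleRoots]), natDegree_scaleRoots,
    leadingCoeff_scaleRoots] at hres
  refine mul_left_cancel₀ hlc ?_
  rw [hres]
  ring

theorem discr_integralNormalization (f : R[X]) :
    f.integralNormalization.discr =
      f.leadingCoeff ^ ((f.natDegree - 1) * (f.natDegree - 2)) * f.discr := by
  rcases eq_or_ne f 0 with rfl | hf
  · simp
  have hlc : f.leadingCoeff ≠ 0 := leadingCoeff_ne_zero.mpr hf
  have hscale : C f.leadingCoeff * f.integralNormalization = f.scaleRoots f.leadingCoeff := by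
    rw [mul_comm, integralNormalization_mul_C_leadingCoeff]
  have hexp : f.natDegree * (f.natDegree - 1) =
      2 * (f.natDegree - 1) + (f.natDegree - 1) * (f.natDegree - 2) := by
    rcases f.natDegree with _ | _ | n
    · rfl
    · rfl
    · change (n + 2) * (n + 1) = 2 * (n + 1) + (n + 1) * n
      ring
  have hdiscr := congrArg discr hscale
  rw [discr_C_mul _ hlc, natDegree_integralNormalization, discr_scaleRoots, hexp, pow_add,
    mul_assoc] at hdiscr
  exact mul_left_cancel₀ (pow_ne_zero _ hlc) hdiscr

end Discriminant

section PowerBasis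

variable {F L : Type*} [Field F] [Field L] [Algebra F L] [Algebra.IsSeparable F L]

theorem prod_algHom_apply_gen_eq_prod_aroots (pb : PowerBasis F L) (E : Type*) [Field E]
    [Algebra F E] [Fintype (L →ₐ[F] E)] (φ : E → E) :
    ∏ σ : L →ₐ[F] E, φ (σ pb.gen) = (((minpoly F pb.gen).aroots E).map φ).prod := by
  classical
  have hnodup : ((minpoly F pb.gen).aroots E).Nodup :=
    nodup_roots (Separable.map (Algebra.IsSeparable.isSeparable F pb.gen))
  rw [Fintype.prod_equiv pb.liftEquiv' (fun σ => φ (σ pb.gen)) (fun z => φ z)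
    (fun σ => by rw [pb.liftEquiv'_apply_coe]), Finset.prod_mem_multiset _ _ _ fun _ => rfl,
    Finset.prod_eq_multiset_prod, Multiset.toFinset_val, hnodup.dedup]

theorem norm_aeval_gen_eq_resultant_minpoly (pb : PowerBasis F L)
    (q : F[X]) {m : ℕ} (hq : q.natDegree ≤ m) :
    Algebra.norm F (aeval pb.gen q) =
      resultant (minpoly F pb.gen) q (minpoly F pb.gen).natDegree m := by
  have : FiniteDimensional F L := pb.finite
  let E := AlgebraicClosure F
  apply (algebraMap F E).injective
  have hmonic : (minpoly F pb.gen).Monic := minpoly.monic pb.isIntegral_gen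
  have hres := resultant_eq_prod_eval ((minpoly F pb.gen).map (algebraMap F E))
    (q.map (algebraMap F E)) m (natDegree_map_le.trans hq) (IsAlgClosed.splits _)
  rw [hmonic.natDegree_map, resultant_map_map, (hmonic.map _).leadingCoeff, one_pow, one_mul]
    at hres
  rw [hres, Algebra.norm_eq_prod_embeddings, ← aroots_def,
    ← prod_algHom_apply_gen_eq_prod_aroots]
  simp [aeval_def, eval_map]

theorem discr_basis_eq_discr_minpoly_gen (pb : PowerBasis F L) :
    Algebra.discr F pb.basis = (minpoly F pb.gen).discr := by
  have : FiniteDimensional F L := pb.finite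
  have hmonic : (minpoly F pb.gen).Monic := minpoly.monic pb.isIntegral_gen
  rw [Algebra.discr_powerBasis_eq_norm, discr_eq_resultant_of_monic hmonic,
    norm_aeval_gen_eq_resultant_minpoly pb _ (natDegree_derivative_le _), pb.finrank,
    pb.natDegree_minpoly]

end PowerBasis

section Index

variable {R ι : Type*} [CommRing R] [Fintype ι] [DecidableEq ι]

theorem det_smul_mem_span_range {M : Type*} [AddCommGroup M] [Module R M]
    (b : Module.Basis ι R M) (v : ι → M) (x : M) :
    b.det v • x ∈ Submodule.span R (Set.range v) := by
  have hbasis (i : ι) : b.det v • b i = ∑ j, (b.toMatrix v).adjugate j i • v j := by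
    have hadj (k : ι) : ∑ j, b.toMatrix v k j * (b.toMatrix v).adjugate j i =
        if k = i then b.det v else 0 := by
      rw [← Matrix.mul_apply, Matrix.mul_adjugate, ← b.det_apply, Matrix.smul_apply,
        Matrix.one_apply, smul_eq_mul, mul_ite, mul_one, mul_zero]
    simp_rw [← b.sum_toMatrix_smul_self v, Finset.smul_sum, smul_smul]
    rw [Finset.sum_comm]
    simp_rw [← Finset.sum_smul, mul_comm ((b.toMatrix v).adjugate _ _), hadj, ite_smul, zero_smul,
      Finset.sum_ite_eq', Finset.mem_univ, if_true]
  rw [← b.sum_repr x, Finset.smul_sum]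
  refine Submodule.sum_mem _ fun i _ => ?_
  rw [smul_comm, hbasis]
  exact Submodule.smul_mem _ _ <| Submodule.sum_mem _ fun j _ =>
    Submodule.smul_mem _ _ (Submodule.subset_span ⟨j, rfl⟩)

theorem discr_eq_det_sq_mul_discr {S : Type*} [CommRing S] [Algebra R S]
    (b : Module.Basis ι R S) (v : ι → S) :
    Algebra.discr R v = b.det v ^ 2 * Algebra.discr R b := by
  rw [b.det_apply, ← Algebra.discr_of_matrix_vecMul, b.toMatrix_map_vecMul]

open NumberField IntermediateField

variable {K : Type*} [Field K]

theorem intCast_mem_conductor_iff (θ : 𝓞 K) (n : ℤ) :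
    (n : 𝓞 K) ∈ conductor ℤ θ ↔ (RingOfIntegers.exponent θ : ℤ) ∣ n := by
  rw [RingOfIntegers.exponent, ← Ideal.mem_span_singleton, Int.ideal_span_absNorm_eq_self,
    Ideal.mem_comap, eq_intCast]

variable [NumberField K]

theorem coe_algebraDiscr_int (v : ι → 𝓞 K) :
    ((Algebra.discr ℤ v : ℤ) : ℚ) = Algebra.discr ℚ (fun i => (v i : K)) := by
  rw [Algebra.discr_def, Algebra.discr_def, ← eq_intCast (Int.castRingHom ℚ), RingHom.map_det]
  congr 1
  ext i j
  simp [Algebra.traceMatrix_apply, Algebra.traceForm_apply, Algebra.coe_trace_int]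

theorem exists_powerBasis_gen_eq {α : K} (hα : ℚ⟮α⟯ = ⊤) : ∃ pb : PowerBasis ℚ K, pb.gen = α := by
  have hint : IsIntegral ℚ α := Algebra.IsIntegral.isIntegral α
  refine ⟨PowerBasis.ofAdjoinEqTop hint ?_, PowerBasis.ofAdjoinEqTop_gen hint _⟩
  rw [← adjoin_simple_toSubalgebra_of_isAlgebraic hint.isAlgebraic, hα, top_toSubalgebra]

theorem minpoly_rat_eq_map_minpoly_int (θ : 𝓞 K) :
    minpoly ℚ (θ : K) = (minpoly ℤ θ).map (algebraMap ℤ ℚ) := by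
  rw [minpoly.isIntegrallyClosed_eq_field_fractions' ℚ θ.isIntegral_coe, RingOfIntegers.minpoly_coe]

theorem coe_discr_minpoly_int {θ : 𝓞 K} {pb : PowerBasis ℚ K} (hpb : pb.gen = θ) :
    ((minpoly ℤ θ).discr : ℚ) = Algebra.discr ℚ pb.basis := by
  rw [discr_basis_eq_discr_minpoly_gen, hpb, minpoly_rat_eq_map_minpoly_int,
    discr_map_of_monic _ (minpoly.monic θ.isIntegral), eq_intCast]

theorem discr_minpoly_int_ne_zero {θ : 𝓞 K} (hθ : ℚ⟮(θ : K)⟯ = ⊤) : (minpoly ℤ θ).discr ≠ 0 := by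
  obtain ⟨pb, hpb⟩ := exists_powerBasis_gen_eq hθ
  rw [← Int.cast_ne_zero (α := ℚ), coe_discr_minpoly_int hpb]
  exact Algebra.discr_not_zero_of_basis ℚ pb.basis

theorem discr_minpoly_int_eq_discr_pow {θ : 𝓞 K} {pb : PowerBasis ℚ K} (hpb : pb.gen = θ) :
    (minpoly ℤ θ).discr = Algebra.discr ℤ (fun i : Fin pb.dim => θ ^ (i : ℕ)) := by
  have hbasis : (fun i : Fin pb.dim => ((θ ^ (i : ℕ) : 𝓞 K) : K)) = pb.basis := by
    ext i
    simp [hpb]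
  rw [← Int.cast_inj (α := ℚ), coe_discr_minpoly_int hpb, coe_algebraDiscr_int, hbasis]

theorem exponent_sq_dvd_discr_minpoly_int {θ : 𝓞 K} (hθ : ℚ⟮(θ : K)⟯ = ⊤) :
    (RingOfIntegers.exponent θ : ℤ) ^ 2 ∣ (minpoly ℤ θ).discr := by
  obtain ⟨pb, hpb⟩ := exists_powerBasis_gen_eq hθ
  have hcard : Fintype.card (Module.Free.ChooseBasisIndex ℤ (𝓞 K)) = pb.dim := by
    rw [← Module.finrank_eq_card_chooseBasisIndex, RingOfIntegers.rank, pb.finrank]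
  let b := (RingOfIntegers.basis K).reindex (Fintype.equivFinOfCardEq hcard)
  let v : Fin pb.dim → 𝓞 K := fun i => θ ^ (i : ℕ)
  have hspan : Submodule.span ℤ (Set.range v) ≤ Subalgebra.toSubmodule (Algebra.adjoin ℤ {θ}) := by
    rw [Submodule.span_le]
    rintro _ ⟨i, rfl⟩
    exact pow_mem (Algebra.self_mem_adjoin_singleton ℤ θ) _
  -- Cramer's rule: the determinant of the powers of `θ` in an integral basis maps `𝓞 K` to `ℤ[θ]`.
  have hcond : ((b.det v : ℤ) : 𝓞 K) ∈ conductor ℤ θ := fun y => by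
    rw [← zsmul_eq_mul]
    exact hspan (det_smul_mem_span_range b v y)
  rw [discr_minpoly_int_eq_discr_pow hpb, discr_eq_det_sq_mul_discr b]
  exact (pow_dvd_pow_of_dvd ((intCast_mem_conductor_iff θ _).mp hcond) 2).mul_right _

end Index

section IntegralGenerator

open NumberField IntermediateField

theorem natDegree_pos_of_ne_zero_of_aeval_eq_zero {A : Type*} [CommRing A] [Nontrivial A]
    [CharZero A] {g : ℤ[X]} (hg : g ≠ 0) {α : A} (hroot : aeval α g = 0) :
    0 < g.natDegree :=
  natDegree_pos_of_aeval_root hg hroot fun _ h => by simpa using h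

variable {K : Type*} [Field K] {g : ℤ[X]} {α : K}

theorem natDegree_minpoly_rat_eq [CharZero K] (hirr : Irreducible g) (hroot : aeval α g = 0) :
    (minpoly ℚ α).natDegree = g.natDegree := by
  have hpos := natDegree_pos_of_ne_zero_of_aeval_eq_zero hirr.ne_zero hroot
  have hirrQ : Irreducible (g.map (algebraMap ℤ ℚ)) :=
    (IsPrimitive.Int.irreducible_iff_irreducible_map_cast (hirr.isPrimitive hpos.ne')).mp hirr
  have hrootQ : aeval α (g.map (algebraMap ℤ ℚ)) = 0 := by rw [aeval_map_algebraMap, hroot]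
  have hlc : (g.map (algebraMap ℤ ℚ)).leadingCoeff⁻¹ ≠ 0 :=
    inv_ne_zero (leadingCoeff_ne_zero.mpr hirrQ.ne_zero)
  rw [← minpoly.eq_of_irreducible hirrQ hrootQ, natDegree_mul_C hlc,
    natDegree_map_eq_of_injective (algebraMap ℤ ℚ).injective_int]

theorem adjoin_intCast_mul_eq [CharZero K] {n : ℤ} (hn : n ≠ 0) (α : K) :
    ℚ⟮(n : K) * α⟯ = ℚ⟮α⟯ := by
  have hnK : (n : K) ≠ 0 := Int.cast_ne_zero.mpr hn
  apply le_antisymm <;> rw [adjoin_simple_le_iff]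
  · exact mul_mem (intCast_mem _ n) (mem_adjoin_simple_self ℚ α)
  · have := mul_mem (inv_mem (intCast_mem ℚ⟮(n : K) * α⟯ n)) (mem_adjoin_simple_self ℚ _)
    rwa [inv_mul_cancel_left₀ hnK] at this

theorem aeval_leadingCoeff_mul_integralNormalization [CharZero K] (hroot : aeval α g = 0) :
    aeval ((g.leadingCoeff : K) * α) g.integralNormalization = 0 := by
  simpa using integralNormalization_aeval_eq_zero hroot fun n hn => by simpa using hn

variable [NumberField K]

theorem finrank_eq_natDegree (hirr : Irreducible g) (hroot : aeval α g = 0) (hgen : ℚ⟮α⟯ = ⊤) :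
    Module.finrank ℚ K = g.natDegree := by
  rw [← (Field.primitive_element_iff_minpoly_natDegree_eq ℚ α).mp hgen,
    natDegree_minpoly_rat_eq hirr hroot]

theorem exists_generator_minpoly_int_eq_integralNormalization (hirr : Irreducible g)
    (hroot : aeval α g = 0) (hgen : ℚ⟮α⟯ = ⊤) :
    ∃ β : 𝓞 K, ℚ⟮(β : K)⟯ = ⊤ ∧ minpoly ℤ β = g.integralNormalization := by
  have hmonic : g.integralNormalization.Monic := monic_integralNormalization hirr.ne_zero
  have hroot' := aeval_leadingCoeff_mul_integralNormalization hroot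
  let β : 𝓞 K := ⟨(g.leadingCoeff : K) * α, g.integralNormalization, hmonic, hroot'⟩
  have hβgen : ℚ⟮(β : K)⟯ = ⊤ :=
    (adjoin_intCast_mul_eq (leadingCoeff_ne_zero.mpr hirr.ne_zero) α).trans hgen
  have hdegree : (minpoly ℤ β).natDegree = g.natDegree := by
    rw [← finrank_eq_natDegree hirr hroot hgen,
      ← (Field.primitive_element_iff_minpoly_natDegree_eq ℚ _).mp hβgen,
      minpoly_rat_eq_map_minpoly_int, (minpoly.monic β.isIntegral).natDegree_map]
  have hdvd : minpoly ℤ β ∣ g.integralNormalization := by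
    rw [← RingOfIntegers.minpoly_coe]
    exact minpoly.isIntegrallyClosed_dvd β.isIntegral_coe hroot'
  refine ⟨β, hβgen, (eq_of_monic_of_dvd_of_natDegree_le (minpoly.monic β.isIntegral) hmonic hdvd
    ?_).symm⟩
  rw [natDegree_integralNormalization, hdegree]

end IntegralGenerator

section RootsModP

theorem omegaPoly_integralNormalization {g : ℤ[X]} (hg : 0 < g.natDegree) {p : ℕ} [Fact p.Prime]
    (hpc : ¬ (p : ℤ) ∣ g.leadingCoeff) : omegaPoly g.integralNormalization p = omegaPoly g p := by
  have hc : (g.leadingCoeff : ZMod p) ≠ 0 := by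
    rwa [Ne, ZMod.intCast_zmod_eq_zero_iff_dvd]
  have hroot (y : ZMod p) : aeval ((g.leadingCoeff : ZMod p) * y) g.integralNormalization = 0 ↔
      aeval y g = 0 := by
    have h := integralNormalization_eval₂_leadingCoeff_mul hg (algebraMap ℤ (ZMod p)) y
    rw [eq_intCast, ← aeval_def, ← aeval_def] at h
    rw [h, mul_eq_zero, or_iff_right (pow_ne_zero _ hc)]
  have hpre : {y : ZMod p | aeval y g = 0} =
      (Equiv.mulLeft₀ _ hc) ⁻¹' {y | aeval y g.integralNormalization = 0} := by
    ext y
    exact (hroot y).symm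
  rw [omegaPoly, omegaPoly, hpre,
    Set.ncard_preimage_of_injective_subset_range (Equiv.injective _)
      (by rw [Equiv.range_eq_univ]; exact Set.subset_univ _)]

theorem map_castRingHom_zmod_ne_zero {g : ℤ[X]} (hg : g.IsPrimitive) {p : ℕ} (hp : p.Prime) :
    g.map (Int.castRingHom (ZMod p)) ≠ 0 := by
  intro h
  have hdvd : C (p : ℤ) ∣ g := (C_dvd_iff_dvd_coeff _ _).mpr fun i => by
    rw [← ZMod.intCast_zmod_eq_zero_iff_dvd, ← eq_intCast (Int.castRingHom (ZMod p)), ← coeff_map,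
      h, coeff_zero]
  exact (Nat.prime_iff_prime_int.mp hp).not_isUnit (hg _ hdvd)

theorem omegaPoly_le_natDegree {g : ℤ[X]} (hg : g.IsPrimitive) {p : ℕ} (hp : p.Prime) :
    omegaPoly g p ≤ g.natDegree := by
  have : Fact p.Prime := ⟨hp⟩
  have hset : {y : ZMod p | aeval y g = 0} =
      (g.map (Int.castRingHom (ZMod p))).rootSet (ZMod p) := by
    ext y
    simp [mem_rootSet, map_castRingHom_zmod_ne_zero hg hp, aeval_def, eval_map]
  rw [omegaPoly, hset]
  exact (ncard_rootSet_le _ _).trans natDegree_map_le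

end RootsModP

section PrimesAbove

open NumberField Ideal

theorem ncard_primesOver_le_finrank {R : Type*} [CommRing R] [IsDomain R] (p : Ideal R) [p.IsPrime]
    (S : Type*) [CommRing S] [Algebra R S] [Module.Finite R S] [Module.Flat R S] :
    (primesOver p S).ncard ≤ Module.finrank R S := by
  have : Finite (primesOver p S) := Algebra.QuasiFinite.finite_primesOver p
  have := Fintype.ofFinite (primesOver p S)
  rw [← sum_ramification_inertia_eq_finrank p S, ← Nat.card_coe_set_eq, Nat.card_eq_fintype_card,
    Fintype.card_eq_sum_ones]
  exact Finset.sum_le_sum fun q _ => by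
    have := q.2.1
    exact Nat.mul_pos (ramificationIdx_pos q.1 R) (inertiaDeg_pos q.1 R)

theorem X_sub_C_mem_monicFactorsMod {K : Type*} [Field K] {p : ℕ} [Fact p.Prime] {β : 𝓞 K}
    {a : ZMod p} :
    X - C a ∈ RingOfIntegers.monicFactorsMod β p ↔ aeval a (minpoly ℤ β) = 0 := by
  have hne : (minpoly ℤ β).map (Int.castRingHom (ZMod p)) ≠ 0 :=
    map_monic_ne_zero (minpoly.monic β.isIntegral)
  rw [Multiset.mem_toFinset, Polynomial.mem_normalizedFactors_iff hne, dvd_iff_isRoot,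
    IsRoot.def, eval_map]
  simp [irreducible_X_sub_C, monic_X_sub_C, aeval_def]

theorem exists_eq_X_sub_C_of_mem_monicFactorsMod {K : Type*} [Field K] {p : ℕ} [Fact p.Prime]
    {β : 𝓞 K} {Q : (ZMod p)[X]} (hQ : Q ∈ RingOfIntegers.monicFactorsMod β p)
    (hdeg : Q.natDegree = 1) : ∃ a, Q = X - C a := by
  have hne : (minpoly ℤ β).map (Int.castRingHom (ZMod p)) ≠ 0 :=
    map_monic_ne_zero (minpoly.monic β.isIntegral)
  rw [Multiset.mem_toFinset, Polynomial.mem_normalizedFactors_iff hne] at hQ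
  exact ⟨-Q.coeff 0, by rw [C_neg, sub_neg_eq_add]; exact hQ.2.1.eq_X_add_C hdeg⟩

variable (K : Type*) [Field K] [NumberField K] (p : ℕ)

/-- The finite set of prime ideals of `𝓞 K` lying over the rational prime `p`; for `p` not prime
the value is meaningless. -/
noncomputable def primesAbove : Finset (Ideal (𝓞 K)) :=
  IsDedekindDomain.primesOverFinset (span {(p : ℤ)}) (𝓞 K)

/-- The primes of `𝓞 K` above `p` of residue degree one, encoded as those of absolute norm `p`. -/
noncomputable def degreeOnePrimes : Finset (Ideal (𝓞 K)) :=
  {P ∈ primesAbove K p | absNorm P = p}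

variable {K p}

theorem absNorm_eq_pow_inertiaDeg_of_mem_primesOver {P : Ideal (𝓞 K)}
    (hP : P ∈ primesOver (span {(p : ℤ)}) (𝓞 K)) : absNorm P = p ^ P.inertiaDeg ℤ := by
  have := hP.1
  have := hP.2
  rw [← absNorm_pow_inertiaDeg (span {(p : ℤ)})]
  simp

variable [hp : Fact p.Prime]

theorem mem_primesAbove {P : Ideal (𝓞 K)} :
    P ∈ primesAbove K p ↔ P ∈ primesOver (span {(p : ℤ)}) (𝓞 K) := by
  have := Int.ideal_span_isMaximal_of_prime p
  exact IsDedekindDomain.mem_primesOverFinset_iff (by simp [hp.out.ne_zero]) _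

theorem card_primesAbove_le_finrank : (primesAbove K p).card ≤ Module.finrank ℚ K := by
  have := Int.ideal_span_isMaximal_of_prime p
  have hcoe : (primesAbove K p : Set (Ideal (𝓞 K))) = primesOver (span {(p : ℤ)}) (𝓞 K) :=
    Set.ext fun _ => mem_primesAbove
  rw [← Set.ncard_coe_finset, hcoe, ← RingOfIntegers.rank K]
  exact ncard_primesOver_le_finrank _ _

theorem card_degreeOnePrimes_le_finrank : (degreeOnePrimes K p).card ≤ Module.finrank ℚ K :=
  (Finset.card_filter_le _ _).trans card_primesAbove_le_finrank

theorem sq_le_absNorm_of_mem_primesAbove {P : Ideal (𝓞 K)} (hP : P ∈ primesAbove K p)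
    (hne : absNorm P ≠ p) : p ^ 2 ≤ absNorm P := by
  rw [mem_primesAbove] at hP
  have hnorm := absNorm_eq_pow_inertiaDeg_of_mem_primesOver hP
  have := hP.1
  have := hP.2
  have hdeg : P.inertiaDeg ℤ ≠ 1 := fun h => hne (by rw [hnorm, h, pow_one])
  have hpos : 0 < P.inertiaDeg ℤ := inertiaDeg_pos P ℤ
  rw [hnorm]
  exact Nat.pow_le_pow_right hp.out.pos (by omega)

theorem absNorm_primesOverSpanEquivMonicFactorsMod_symm {β : 𝓞 K}
    (hpe : ¬ p ∣ RingOfIntegers.exponent β) (Q : RingOfIntegers.monicFactorsMod β p) :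
    absNorm ((NumberField.Ideal.primesOverSpanEquivMonicFactorsMod hpe).symm Q).1 =
      p ^ Q.1.natDegree := by
  rw [absNorm_eq_pow_inertiaDeg_of_mem_primesOver (Subtype.prop _),
    ← NumberField.Ideal.inertiaDeg_primesOverSpanEquivMonicFactorsMod_symm_apply' hpe Q.2]

theorem card_degreeOnePrimes_eq_omegaPoly_minpoly {β : 𝓞 K}
    (hpe : ¬ p ∣ RingOfIntegers.exponent β) :
    (degreeOnePrimes K p).card = omegaPoly (minpoly ℤ β) p := by
  let e := NumberField.Ideal.primesOverSpanEquivMonicFactorsMod hpe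
  let prime (a : ZMod p) (ha : aeval a (minpoly ℤ β) = 0) :
      primesOver (span {(p : ℤ)}) (𝓞 K) := e.symm ⟨X - C a, X_sub_C_mem_monicFactorsMod.mpr ha⟩
  symm
  rw [omegaPoly, ← Set.ncard_coe_finset]
  refine Set.ncard_congr (fun a ha => (prime a ha).1) (fun a ha => ?_) (fun a b ha hb hab => ?_)
    (fun P hP => ?_)
  · refine Finset.mem_filter.mpr ⟨mem_primesAbove.mpr (prime a ha).2, ?_⟩
    rw [absNorm_primesOverSpanEquivMonicFactorsMod_symm, natDegree_X_sub_C, pow_one]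
  · simpa [prime] using Subtype.ext hab
  · obtain ⟨hPmem, hnorm⟩ := Finset.mem_filter.mp hP
    obtain ⟨Q, hQ⟩ := e.symm.surjective ⟨P, mem_primesAbove.mp hPmem⟩
    have hdeg : Q.1.natDegree = 1 := by
      have h := absNorm_primesOverSpanEquivMonicFactorsMod_symm hpe Q
      rw [hQ, hnorm] at h
      exact Nat.pow_right_injective hp.out.two_le (h.symm.trans (pow_one p).symm)
    obtain ⟨a, ha⟩ := exists_eq_X_sub_C_of_mem_monicFactorsMod Q.2 hdeg
    refine ⟨a, X_sub_C_mem_monicFactorsMod.mp (ha ▸ Q.2), ?_⟩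
    simp only [prime, ← ha, hQ, Subtype.coe_eta]

end PrimesAbove

section DegreeOneSum

open NumberField Ideal

theorem sum_primesLE_inv_sq_le (n : ℕ) : ∑ p ∈ Nat.primesLE n, ((p : ℝ) ^ 2)⁻¹ ≤ 0.64 := by
  have hsub : Nat.primesLE n ⊆ {2, 3} ∪ Finset.Ioc 4 (max 4 n) := fun p hp => by
    obtain ⟨hpn, hprime⟩ := Nat.mem_primesLE.mp hp
    have h2 := hprime.two_le
    have h4 : p ≠ 4 := by rintro rfl; norm_num at hprime
    simp only [Finset.mem_union, Finset.mem_insert, Finset.mem_singleton, Finset.mem_Ioc]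
    omega
  have hdisj : Disjoint ({2, 3} : Finset ℕ) (Finset.Ioc 4 (max 4 n)) := by
    simp [Finset.disjoint_left]
  have htail := sum_Ioc_inv_sq_le_sub (α := ℝ) four_ne_zero (le_max_left 4 n)
  have hnonneg : (0 : ℝ) ≤ ((max 4 n : ℕ) : ℝ)⁻¹ := by positivity
  calc ∑ p ∈ Nat.primesLE n, ((p : ℝ) ^ 2)⁻¹
      ≤ ∑ p ∈ {2, 3} ∪ Finset.Ioc 4 (max 4 n), ((p : ℝ) ^ 2)⁻¹ :=
        Finset.sum_le_sum_of_subset_of_nonneg hsub fun _ _ _ => by positivity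
    _ = (2 ^ 2)⁻¹ + (3 ^ 2)⁻¹ + ∑ p ∈ Finset.Ioc 4 (max 4 n), ((p : ℝ) ^ 2)⁻¹ := by
        rw [Finset.sum_union hdisj, Finset.sum_pair (by norm_num), Nat.cast_ofNat, Nat.cast_ofNat]
    _ ≤ (2 ^ 2)⁻¹ + (3 ^ 2)⁻¹ + 4⁻¹ := by
        rw [Nat.cast_ofNat] at htail
        linarith
    _ ≤ 0.64 := by norm_num

theorem mem_primesLE_floor {p : ℕ} {x : ℝ} : p ∈ Nat.primesLE ⌊x⌋₊ ↔ p.Prime ∧ (p : ℝ) ≤ x := by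
  rw [Nat.mem_primesLE, and_comm]
  exact and_congr_right fun hp => Nat.le_floor_iff' hp.ne_zero

variable (K : Type*) [Field K] [NumberField K]

theorem finite_setOf_isPrime_absNorm_le (x : ℝ) :
    {P : Ideal (𝓞 K) | P.IsPrime ∧ P ≠ ⊥ ∧ (absNorm P : ℝ) ≤ x}.Finite :=
  (finite_setOfPred_absNorm_le ⌊x⌋₊).subset fun _ hP => Nat.le_floor hP.2.2

variable {K}

theorem absNorm_under_mem_primesLE {P : Ideal (𝓞 K)} [P.IsPrime] (hbot : P ≠ ⊥) {x : ℝ}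
    (hx : (absNorm P : ℝ) ≤ x) : absNorm (under ℤ P) ∈ Nat.primesLE ⌊x⌋₊ := by
  have : NeZero P := ⟨hbot⟩
  have hpos : 0 < absNorm P := Nat.pos_of_ne_zero (absNorm_eq_zero_iff.not.mpr hbot)
  have hle := Nat.le_of_dvd hpos (Int.absNorm_under_dvd_absNorm P)
  exact Nat.mem_primesLE.mpr ⟨hle.trans (Nat.le_floor hx), Nat.absNorm_under_prime P⟩

theorem mem_primesAbove_iff_absNorm_under {p : ℕ} [hp : Fact p.Prime] {P : Ideal (𝓞 K)} :
    P ∈ primesAbove K p ↔ (P.IsPrime ∧ P ≠ ⊥) ∧ absNorm (under ℤ P) = p := by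
  rw [mem_primesAbove]
  constructor
  · rintro ⟨hprime, hover⟩
    refine ⟨⟨hprime, ne_bot_of_liesOver_of_ne_bot (p := span {(p : ℤ)}) ?_ P⟩, ?_⟩
    · simp [hp.out.ne_zero]
    · simp [← hover.over]
  · rintro ⟨⟨hprime, -⟩, rfl⟩
    exact ⟨hprime, ⟨Int.ideal_span_absNorm_eq_self _⟩⟩

variable (K)

theorem MK_eq_sum_primesAbove (x : ℝ) :
    MK K x = ∑ p ∈ Nat.primesLE ⌊x⌋₊,
      ∑ P ∈ primesAbove K p with (absNorm P : ℝ) ≤ x, 1 / (absNorm P : ℝ) := by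
  have hfin := finite_setOf_isPrime_absNorm_le K x
  have hsum : MK K x = ∑ P ∈ hfin.toFinset, 1 / (absNorm P : ℝ) := by
    rw [← Finset.tsum_subtype', hfin.coe_toFinset]
    rfl
  have hmaps : ∀ P ∈ hfin.toFinset, absNorm (under ℤ P) ∈ Nat.primesLE ⌊x⌋₊ := fun P hP => by
    obtain ⟨hprime, hbot, hle⟩ := hfin.mem_toFinset.mp hP
    exact absNorm_under_mem_primesLE hbot hle
  rw [hsum, ← Finset.sum_fiberwise_of_maps_to hmaps]
  refine Finset.sum_congr rfl fun p hp => Finset.sum_congr ?_ fun _ _ => rfl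
  have : Fact p.Prime := ⟨(mem_primesLE_floor.mp hp).1⟩
  ext P
  rw [Finset.mem_filter, Finset.mem_filter, hfin.mem_toFinset, mem_primesAbove_iff_absNorm_under]
  simp only [Set.mem_ofPred_eq]
  tauto

/-- `Σ_{p ≤ x} r₁(p)/p`, where `r₁(p)` is the number of primes of `𝓞 K` above `p` of residue
degree one. It interpolates between `omegaSum` and `MK`. -/
noncomputable def degreeOneSum (x : ℝ) : ℝ :=
  ∑ p ∈ Nat.primesLE ⌊x⌋₊, ((degreeOnePrimes K p).card : ℝ) / p

theorem filter_primesAbove_absNorm_eq {p : ℕ} {x : ℝ} (hpx : (p : ℝ) ≤ x) :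
    {P ∈ {P ∈ primesAbove K p | (absNorm P : ℝ) ≤ x} | absNorm P = p} = degreeOnePrimes K p := by
  rw [Finset.filter_filter, degreeOnePrimes]
  refine Finset.filter_congr fun P _ => and_iff_right_of_imp ?_
  rintro hnorm
  rwa [hnorm]

theorem sum_primesAbove_eq_add {p : ℕ} {x : ℝ} (hpx : (p : ℝ) ≤ x) :
    ∑ P ∈ primesAbove K p with (absNorm P : ℝ) ≤ x, 1 / (absNorm P : ℝ) =
      ((degreeOnePrimes K p).card : ℝ) / p +
        ∑ P ∈ {P ∈ primesAbove K p | (absNorm P : ℝ) ≤ x} with absNorm P ≠ p,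
          1 / (absNorm P : ℝ) := by
  rw [← Finset.sum_filter_add_sum_filter_not _ (fun P => absNorm P = p),
    filter_primesAbove_absNorm_eq K hpx]
  have hnorm : ∀ P ∈ degreeOnePrimes K p, 1 / (absNorm P : ℝ) = 1 / p := fun P hP => by
    rw [(Finset.mem_filter.mp hP).2]
  rw [Finset.sum_congr rfl hnorm, Finset.sum_const, nsmul_eq_mul, mul_one_div]

theorem abs_card_degreeOnePrimes_div_sub_sum_le {p : ℕ} [hp : Fact p.Prime] {x : ℝ}
    (hpx : (p : ℝ) ≤ x) :
    |((degreeOnePrimes K p).card : ℝ) / p -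
      ∑ P ∈ primesAbove K p with (absNorm P : ℝ) ≤ x, 1 / (absNorm P : ℝ)| ≤
        Module.finrank ℚ K * ((p : ℝ) ^ 2)⁻¹ := by
  have hterm : ∀ P ∈ {P ∈ {P ∈ primesAbove K p | (absNorm P : ℝ) ≤ x} | absNorm P ≠ p},
      1 / (absNorm P : ℝ) ≤ ((p : ℝ) ^ 2)⁻¹ := fun P hP => by
    obtain ⟨hP, hne⟩ := Finset.mem_filter.mp hP
    have hsq := sq_le_absNorm_of_mem_primesAbove (Finset.filter_subset _ _ hP) hne
    have hpos : (0 : ℝ) < p := by exact_mod_cast hp.out.pos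
    rw [one_div]
    exact inv_anti₀ (by positivity) (by exact_mod_cast hsq)
  rw [sum_primesAbove_eq_add K hpx, sub_add_cancel_left, abs_neg,
    abs_of_nonneg (Finset.sum_nonneg fun _ _ => by positivity)]
  refine (Finset.sum_le_card_nsmul _ _ _ hterm).trans ?_
  rw [nsmul_eq_mul]
  gcongr
  exact ((Finset.card_filter_le _ _).trans (Finset.card_filter_le _ _)).trans
    card_primesAbove_le_finrank

theorem abs_degreeOneSum_sub_MK_le (x : ℝ) :
    |degreeOneSum K x - MK K x| ≤ Module.finrank ℚ K * 0.64 := by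
  rw [degreeOneSum, MK_eq_sum_primesAbove, ← Finset.sum_sub_distrib]
  calc _ ≤ ∑ p ∈ Nat.primesLE ⌊x⌋₊, Module.finrank ℚ K * ((p : ℝ) ^ 2)⁻¹ :=
        (Finset.abs_sum_le_sum_abs _ _).trans <| Finset.sum_le_sum fun p hp => by
          obtain ⟨hprime, hpx⟩ := mem_primesLE_floor.mp hp
          have : Fact p.Prime := ⟨hprime⟩
          exact abs_card_degreeOnePrimes_div_sub_sum_le K hpx
    _ ≤ Module.finrank ℚ K * 0.64 := by
        rw [← Finset.mul_sum]
        gcongr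
        exact sum_primesLE_inv_sq_le _

end DegreeOneSum

section ExceptionalPrimes

theorem sum_ite_le_MQ (x y : ℝ) :
    ∑ p ∈ Nat.primesLE ⌊x⌋₊, (if (p : ℝ) ≤ y then 1 / (p : ℝ) else 0) ≤ MQ y := by
  rw [← Finset.sum_filter, MQ, ← Nat.primesLE_eq_filter_range]
  refine Finset.sum_le_sum_of_subset_of_nonneg (fun p hp => ?_) fun _ _ _ => by positivity
  obtain ⟨hp, hpy⟩ := Finset.mem_filter.mp hp
  exact mem_primesLE_floor.mpr ⟨(mem_primesLE_floor.mp hp).1, hpy⟩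

theorem abs_sum_primesLE_le_mul_MQ_add {t : ℕ → ℝ} {d : ℝ} (hd : 0 ≤ d) {y z : ℝ}
    (hbound : ∀ p : ℕ, p.Prime → |t p| ≤ d * (1 / p))
    (hzero : ∀ p : ℕ, p.Prime → y < p → z < p → t p = 0) (x : ℝ) :
    |∑ p ∈ Nat.primesLE ⌊x⌋₊, t p| ≤ d * (MQ y + MQ z) := by
  let indicator (w : ℝ) (p : ℕ) : ℝ := if (p : ℝ) ≤ w then 1 / p else 0
  have hnonneg (w : ℝ) (p : ℕ) : 0 ≤ indicator w p := by
    dsimp only [indicator]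
    split_ifs <;> positivity
  have hterm : ∀ p ∈ Nat.primesLE ⌊x⌋₊, |t p| ≤ d * (indicator y p + indicator z p) := by
    intro p hp
    have hp := (mem_primesLE_floor.mp hp).1
    by_cases hy : (p : ℝ) ≤ y
    · refine (hbound p hp).trans (mul_le_mul_of_nonneg_left ?_ hd)
      exact le_add_of_le_of_nonneg (if_pos hy).ge (hnonneg z p)
    by_cases hz : (p : ℝ) ≤ z
    · refine (hbound p hp).trans (mul_le_mul_of_nonneg_left ?_ hd)
      exact le_add_of_nonneg_of_le (hnonneg y p) (if_pos hz).ge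
    rw [hzero p hp (not_le.mp hy) (not_le.mp hz), abs_zero]
    exact mul_nonneg hd (add_nonneg (hnonneg y p) (hnonneg z p))
  refine ((Finset.abs_sum_le_sum_abs _ _).trans (Finset.sum_le_sum hterm)).trans ?_
  rw [← Finset.mul_sum, Finset.sum_add_distrib]
  exact mul_le_mul_of_nonneg_left (add_le_add (sum_ite_le_MQ x y) (sum_ite_le_MQ x z)) hd

theorem cast_le_abs_of_dvd {p : ℕ} {c : ℤ} (hc : c ≠ 0) (hpc : (p : ℤ) ∣ c) :
    (p : ℝ) ≤ |(c : ℝ)| := by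
  exact_mod_cast Int.le_of_dvd (abs_pos.mpr hc) ((dvd_abs _ _).mpr hpc)

theorem cast_le_sqrt_abs_of_sq_dvd {p : ℕ} {D : ℤ} (hD : D ≠ 0) (hpD : (p : ℤ) ^ 2 ∣ D) :
    (p : ℝ) ≤ √|(D : ℝ)| := by
  have hle := cast_le_abs_of_dvd (p := p ^ 2) hD (by exact_mod_cast hpD)
  exact Real.le_sqrt_of_sq_le (by exact_mod_cast hle)

open NumberField

variable {g : ℤ[X]} {K : Type*} [Field K] [NumberField K] {α : K}

theorem abs_discr_integralNormalization (hg : 0 < g.natDegree) :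
    |(g.integralNormalization.discr : ℝ)| =
      |(g.leadingCoeff : ℝ)| ^ ((g.natDegree - 1) * (g.natDegree - 2)) * |(polyDisc g : ℝ)| := by
  have h : |g.integralNormalization.discr| =
      |g.leadingCoeff| ^ ((g.natDegree - 1) * (g.natDegree - 2)) * |polyDisc g| := by
    rw [discr_integralNormalization, abs_mul, abs_pow, abs_polyDisc hg]
  exact_mod_cast h

theorem omegaPoly_eq_card_degreeOnePrimes (hirr : Irreducible g) (hroot : aeval α g = 0)
    (hgen : IntermediateField.adjoin ℚ {α} = ⊤) {p : ℕ} [Fact p.Prime]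
    (hc : |(g.leadingCoeff : ℝ)| < p) (hD : √|(g.integralNormalization.discr : ℝ)| < p) :
    omegaPoly g p = (degreeOnePrimes K p).card := by
  obtain ⟨β, hβ, hmin⟩ := exists_generator_minpoly_int_eq_integralNormalization hirr hroot hgen
  have hpc : ¬ (p : ℤ) ∣ g.leadingCoeff := fun h =>
    hc.not_ge (cast_le_abs_of_dvd (leadingCoeff_ne_zero.mpr hirr.ne_zero) h)
  have hpe : ¬ p ∣ RingOfIntegers.exponent β := fun h => by
    have hsq : (p : ℤ) ^ 2 ∣ (minpoly ℤ β).discr :=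
      (pow_dvd_pow_of_dvd (Int.natCast_dvd_natCast.mpr h) 2).trans
        (exponent_sq_dvd_discr_minpoly_int hβ)
    rw [← hmin] at hD
    exact hD.not_ge (cast_le_sqrt_abs_of_sq_dvd (discr_minpoly_int_ne_zero hβ) hsq)
  rw [card_degreeOnePrimes_eq_omegaPoly_minpoly hpe, hmin, omegaPoly_integralNormalization
    (natDegree_pos_of_ne_zero_of_aeval_eq_zero hirr.ne_zero hroot) hpc]

theorem abs_omegaPoly_div_sub_card_degreeOnePrimes_div_le (hirr : Irreducible g)
    (hroot : aeval α g = 0) (hgen : IntermediateField.adjoin ℚ {α} = ⊤) {p : ℕ} (hp : p.Prime) :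
    |(omegaPoly g p : ℝ) / p - ((degreeOnePrimes K p).card : ℝ) / p| ≤
      g.natDegree * (1 / (p : ℝ)) := by
  have : Fact p.Prime := ⟨hp⟩
  have hpos := natDegree_pos_of_ne_zero_of_aeval_eq_zero hirr.ne_zero hroot
  have homega : (omegaPoly g p : ℝ) ≤ g.natDegree := by
    exact_mod_cast omegaPoly_le_natDegree (hirr.isPrimitive hpos.ne') hp
  have hcard : ((degreeOnePrimes K p).card : ℝ) ≤ g.natDegree := by
    rw [← finrank_eq_natDegree hirr hroot hgen]
    exact_mod_cast card_degreeOnePrimes_le_finrank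
  rw [← sub_div, abs_div, Nat.abs_cast, div_eq_mul_one_div]
  gcongr
  exact abs_sub_le_of_nonneg_of_le (Nat.cast_nonneg _) homega (Nat.cast_nonneg _) hcard

theorem abs_omegaSum_sub_degreeOneSum_le (hirr : Irreducible g) (hroot : aeval α g = 0)
    (hgen : IntermediateField.adjoin ℚ {α} = ⊤) (x : ℝ) :
    |omegaSum g x - degreeOneSum K x| ≤ g.natDegree *
      (MQ |(g.leadingCoeff : ℝ)| + MQ √|(g.integralNormalization.discr : ℝ)|) := by
  rw [omegaSum, degreeOneSum, ← Nat.primesLE_eq_filter_range, ← Finset.sum_sub_distrib]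
  refine abs_sum_primesLE_le_mul_MQ_add (Nat.cast_nonneg _) (fun p hp =>
    abs_omegaPoly_div_sub_card_degreeOnePrimes_div_le hirr hroot hgen hp) (fun p hp hc hD => ?_) x
  have : Fact p.Prime := ⟨hp⟩
  rw [omegaPoly_eq_card_degreeOnePrimes hirr hroot hgen hc hD, sub_self]

end ExceptionalPrimes

theorem mertens_sum_vs_omega_sum_general (g : ℤ[X]) (hirr : Irreducible g)
    (K : Type*) [Field K] [NumberField K] (α : K) (hroot : aeval α g = 0)
    (hgen : IntermediateField.adjoin ℚ {α} = ⊤) (x : ℝ) :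
    |omegaSum g x - MK K x| ≤ g.natDegree * (MQ |(g.leadingCoeff : ℝ)| +
      MQ √(|(g.leadingCoeff : ℝ)| ^ ((g.natDegree - 1) * (g.natDegree - 2)) *
        |(polyDisc g : ℝ)|) + 0.64) := by
  have hpos := natDegree_pos_of_ne_zero_of_aeval_eq_zero hirr.ne_zero hroot
  have hMK := abs_degreeOneSum_sub_MK_le K x
  rw [finrank_eq_natDegree hirr hroot hgen] at hMK
  rw [← abs_discr_integralNormalization hpos, mul_add]
  exact (abs_sub_le _ (degreeOneSum K x) _).trans
    (add_le_add (abs_omegaSum_sub_degreeOneSum_le hirr hroot hgen x) hMK)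

/-- **Theorem 1 (Mertens-type sum).** Let `g ∈ ℤ[x]` be irreducible of degree `d ≥ 1` with
leading coefficient `c`, let `α` be a root of `g`, and `K = ℚ(α)`. Set
`𝐃_g = |c|^{(d-1)(d-2)} |D_g|`. For every real `x > max{2, √𝐃_g}`,
`|Σ_{p ≤ x} ω_g(p)/p − Σ_{N(𝔭) ≤ x} 1/N(𝔭)| ≤ d (M_ℚ(|c|) + M_ℚ(√𝐃_g) + 0.64)`. -/
theorem mertens_sum_vs_omega_sum (g : Polynomial ℤ) (hirr : Irreducible g)
    (d : ℕ) (hd : d = g.natDegree) (hd1 : 1 ≤ d)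
    (c : ℤ) (hc : c = g.leadingCoeff)
    (K : Type*) [Field K] [NumberField K] (α : K)
    (hroot : Polynomial.aeval α g = 0)
    (hgen : IntermediateField.adjoin ℚ {α} = ⊤)
    (Dg : ℝ) (hDg : Dg = (|c| : ℝ) ^ ((d - 1) * (d - 2)) * (|polyDisc g| : ℝ))
    (x : ℝ) (hx : x > max 2 (Real.sqrt Dg)) :
    |omegaSum g x - MK K x| ≤ (d : ℝ) * (MQ (|c| : ℝ) + MQ (Real.sqrt Dg) + 0.64) := by
  subst hd hc hDg
  exact mertens_sum_vs_omega_sum_general g hirr K α hroot hgen x
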